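/- arXiv:1808.09985 — 2 statements merged into one kernel-verified Lean document; each statement's English description precedes it below -/
import Mathlib

section
/- Let s ↦ P(s), s ∈ [0,1], be a continuously differentiable family of orthogonal projections on a finite-dimensional complex Hilbert space, and let s ↦ U(s) solve the Kato equation U̇(s) = [Ṗ(s), P(s)] U(s) with U(0) = 1. Then U(s) is unitary for every s and the flow intertwines the projections: U(s) P(0) U(s)* = P(s) for all s ∈ [0,1]. -/
/-- Kato's parallel transport: if `s ↦ P s`, `s ∈ [0,1]`, is a continuously differentiable
family of orthogonal projections and `U` solves `U̇ = [Ṗ, P] U`, `U 0 = 1`, then each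
`U s` is unitary and `U s * P 0 * (U s)⋆ = P s`. -/
theorem stmt_3 {𝓗 : Type*} [NormedAddCommGroup 𝓗] [InnerProductSpace ℂ 𝓗]
    [FiniteDimensional ℂ 𝓗]
    (P P' U U' : ℝ → 𝓗 →L[ℂ] 𝓗)
    (hPderiv : ∀ s ∈ Set.Icc (0:ℝ) 1, HasDerivWithinAt P (P' s) (Set.Icc 0 1) s)
    (hP'cont : ContinuousOn P' (Set.Icc 0 1))
    (hidem : ∀ s ∈ Set.Icc (0:ℝ) 1, P s * P s = P s)
    (hsa : ∀ s ∈ Set.Icc (0:ℝ) 1, IsSelfAdjoint (P s))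
    (hUderiv : ∀ s ∈ Set.Icc (0:ℝ) 1, HasDerivWithinAt U (U' s) (Set.Icc 0 1) s)
    (hKato : ∀ s ∈ Set.Icc (0:ℝ) 1, U' s = (P' s * P s - P s * P' s) * U s)
    (hU0 : U 0 = 1) :
    ∀ s ∈ Set.Icc (0:ℝ) 1,
      (U s * star (U s) = 1 ∧ star (U s) * U s = 1) ∧
      U s * P 0 * star (U s) = P s := by
  have hud : ∀ s ∈ Set.Icc (0:ℝ) 1, UniqueDiffWithinAt ℝ (Set.Icc (0:ℝ) 1) s :=
    uniqueDiffOn_Icc zero_lt_one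
  have hconst : ∀ f : ℝ → 𝓗 →L[ℂ] 𝓗,
      (∀ s ∈ Set.Icc (0:ℝ) 1, HasDerivWithinAt f 0 (Set.Icc 0 1) s) →
      ∀ s ∈ Set.Icc (0:ℝ) 1, f s = f 0 := by
    intro f hf
    refine constant_of_derivWithin_zero (fun s hs => (hf s hs).differentiableWithinAt) ?_
    intro s hs
    have hs' := Set.Ico_subset_Icc_self hs
    exact (hf s hs').derivWithin (hud s hs')
  have hP'sa : ∀ s ∈ Set.Icc (0:ℝ) 1, star (P' s) = P' s := by
    intro s hs
    have h1 : HasDerivWithinAt P (star (P' s)) (Set.Icc 0 1) s :=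
      (hPderiv s hs).star.congr (fun x hx => (hsa x hx).symm) (hsa s hs).symm
    exact (hud s hs).eq_deriv _ h1 (hPderiv s hs)
  have hP'id : ∀ s ∈ Set.Icc (0:ℝ) 1, P' s * P s + P s * P' s = P' s := by
    intro s hs
    have h1 : HasDerivWithinAt P (P' s * P s + P s * P' s) (Set.Icc 0 1) s :=
      ((hPderiv s hs).mul (hPderiv s hs)).congr (fun x hx => (hidem x hx).symm) (hidem s hs).symm
    exact (hud s hs).eq_deriv _ h1 (hPderiv s hs)
  have hPPP : ∀ s ∈ Set.Icc (0:ℝ) 1, P s * P' s * P s = 0 := by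
    intro s hs
    have h1 := congrArg (fun X => P s * X * P s) (hP'id s hs)
    have h2 : P s * (P' s * P s + P s * P' s) * P s
        = P s * P' s * (P s * P s) + (P s * P s) * P' s * P s := by noncomm_ring
    simp only [h2, hidem s hs] at h1
    simpa using h1
  have hU'star : ∀ s ∈ Set.Icc (0:ℝ) 1,
      star (U' s) = star (U s) * (P s * P' s - P' s * P s) := by
    intro s hs
    rw [hKato s hs, star_mul, star_sub, star_mul, star_mul, hP'sa s hs, (hsa s hs).star_eq]
  have hiso : ∀ s ∈ Set.Icc (0:ℝ) 1, star (U s) * U s = 1 := by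
    intro s hs
    have h := hconst (fun s => star (U s) * U s) (fun s hs => by
      have h1 : HasDerivWithinAt (fun s => star (U s) * U s)
        (star (U' s) * U s + star (U s) * U' s) (Set.Icc 0 1) s :=
        (hUderiv s hs).star.mul (hUderiv s hs)
      refine h1.congr_deriv ?_
      rw [hU'star s hs, hKato s hs]
      noncomm_ring) s hs
    simpa [hU0] using h
  have hint : ∀ s ∈ Set.Icc (0:ℝ) 1, star (U s) * P s * U s = P 0 := by
    intro s hs
    have h := hconst (fun s => star (U s) * P s * U s) (fun s hs => by
      have h1 : HasDerivWithinAt (fun s => star (U s) * P s * U s)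
        ((star (U' s) * P s + star (U s) * P' s) * U s + star (U s) * P s * U' s)
        (Set.Icc 0 1) s := ((hUderiv s hs).star.mul (hPderiv s hs)).mul (hUderiv s hs)
      refine h1.congr_deriv ?_
      rw [hU'star s hs, hKato s hs]
      have e : (star (U s) * (P s * P' s - P' s * P s) * P s + star (U s) * P' s) * U s +
          star (U s) * P s * ((P' s * P s - P s * P' s) * U s)
          = star (U s) * (P s * P' s * P s + P s * P' s * P s - P' s * (P s * P s)
            - (P s * P s) * P' s + P' s) * U s := by noncomm_ring
      have e2 : (0 : 𝓗 →L[ℂ] 𝓗) + 0 - P' s * P s - P s * P' s + P' s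
          = P' s - (P' s * P s + P s * P' s) := by noncomm_ring
      refine e.trans ?_
      rw [hPPP s hs, hidem s hs, e2, hP'id s hs]
      simp) s hs
    simpa [hU0] using h
  intro s hs
  have hl := hiso s hs
  have hr : U s * star (U s) = 1 := by
    have h1 : ((star (U s) : 𝓗 →L[ℂ] 𝓗) : 𝓗 →ₗ[ℂ] 𝓗) * (U s : 𝓗 →ₗ[ℂ] 𝓗) = 1 := by
      ext x
      exact congrArg (fun X : 𝓗 →L[ℂ] 𝓗 => X x) hl
    have h2 := mul_eq_one_comm.mp h1
    ext x
    exact congrArg (fun X : 𝓗 →ₗ[ℂ] 𝓗 => X x) h2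
  refine ⟨⟨hr, hl⟩, ?_⟩
  rw [← hint s hs]
  calc U s * (star (U s) * P s * U s) * star (U s)
      = (U s * star (U s)) * P s * (U s * star (U s)) := by noncomm_ring
    _ = P s := by rw [hr]; simp
end

section
/- Let s ↦ H(s), s ∈ [0,1], be a twice continuously differentiable family of Hermitian operators on a finite-dimensional complex Hilbert space such that for every s the spectrum of H(s) decomposes as Σ(s) ∪ Σ'(s) with Σ(s) ⊂ [a,b] and dist(Σ'(s), [a,b]) ≥ γ > 0, and let P(s) be the spectral projection of H(s) onto Σ(s). Assume Ḣ(0) = Ḣ(1) = 0. Then there exists a constant C (depending on the family H and on γ but not on ε) such that for every ε ∈ (0,1] and every differentiable solution ρ : [0,1] → operators of the driven equation ε ρ̇(s) = −i[H(s), ρ(s)] with ρ(0) = P(0), one has ‖ρ(1) − P(1)‖ ≤ C ε. -/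
open scoped Topology
open Set Filter

lemma aux_norm_bound {A : Type*} [CStarAlgebra A] (D D' T E : ℝ → A) (M : ℝ)
    (hT : ∀ s ∈ Icc (0:ℝ) 1, IsSelfAdjoint (T s))
    (hD : ∀ s ∈ Icc (0:ℝ) 1, HasDerivWithinAt D (D' s) (Icc 0 1) s)
    (hD' : ∀ s ∈ Icc (0:ℝ) 1, D' s = Complex.I • (T s * D s - D s * T s) + E s)
    (hE : ∀ s ∈ Icc (0:ℝ) 1, ‖E s‖ ≤ M) : ‖D 1‖ ≤ ‖D 0‖ + M := by
  have key := image_le_of_liminf_slope_right_le_deriv_boundary (f := fun s => ‖D s‖) (a := 0)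
    (b := 1) (B := fun s => ‖D 0‖ + M * s) (B' := fun _ => M)
    (fun s hs => (hD s hs).continuousWithinAt.norm) (by simp) (by fun_prop)
    (fun x _ => by
      simpa using (((hasDerivAt_id x).const_mul M).const_add ‖D 0‖).hasDerivWithinAt)
    ?_ (x := 1) (by simp)
  · simpa using key
  intro x hx r hr
  let _ : NormedAlgebra ℚ A := NormedAlgebra.restrictScalars ℚ ℂ A
  have hx' : x ∈ Icc (0:ℝ) 1 := ⟨hx.1, hx.2.le⟩
  set y : A := Complex.I • T x with hy
  have hyskew : ∀ t : ℝ, NormedSpace.exp (t • y) ∈ unitary A := by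
    intro t
    apply NormedSpace.exp_mem_unitary_of_mem_skewAdjoint
    rw [skewAdjoint.mem_iff, hy]
    simp [(hT x hx').star_eq]
  have hyskew' : ∀ t : ℝ, NormedSpace.exp (t • (-y)) ∈ unitary A := by
    intro t
    have := hyskew (-t)
    simpa using this
  set G : ℝ → A := fun z => NormedSpace.exp ((z - x) • y) * D x * NormedSpace.exp ((z - x) • (-y))
  have hG : ∀ z, ‖G z‖ = ‖D x‖ := by
    intro z
    simp only [G]
    rw [CStarRing.norm_mul_mem_unitary _ (hyskew' _), CStarRing.norm_mem_unitary_mul _ (hyskew _)]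
  have hexp : ∀ w : A, HasDerivAt (fun z : ℝ => NormedSpace.exp ((z - x) • w)) w x := by
    intro w
    have h1 := hasDerivAt_exp_smul_const (𝕂 := ℝ) w (x - x)
    have h2 := HasDerivAt.scomp (h := fun z : ℝ => z - x) x h1 ((hasDerivAt_id x).sub_const x)
    rw [sub_self, zero_smul, NormedSpace.exp_zero, one_mul, one_smul] at h2
    exact h2
  have hGd : HasDerivAt G (y * D x - D x * y) x := by
    have := ((hexp y).mul_const (D x)).mul (hexp (-y))
    have e : y * D x * NormedSpace.exp ((x - x) • (-y)) +
        NormedSpace.exp ((x - x) • y) * D x * (-y) = y * D x - D x * y := by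
      simp [sub_eq_add_neg]
    rw [e] at this
    exact this
  have hIoi : Icc (0:ℝ) 1 ∈ 𝓝[>] x := by
    have : Ioc x 1 ∈ 𝓝[>] x := Ioc_mem_nhdsGT hx.2
    exact mem_of_superset this fun z hz => ⟨hx.1.trans hz.1.le, hz.2⟩
  have hDd : HasDerivWithinAt D (D' x) (Ioi x) x :=
    (hD x hx').mono_of_mem_nhdsWithin hIoi
  have hW : HasDerivWithinAt (fun z => D z - G z) (E x) (Ioi x) x := by
    have := hDd.sub hGd.hasDerivWithinAt
    have e : D' x - (y * D x - D x * y) = E x := by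
      rw [hD' x hx', hy]
      simp [smul_sub]
    rw [e] at this
    exact this
  have hlim := (hasDerivWithinAt_iff_tendsto_slope' (by simp)).1 hW
  have hev := hlim.norm.eventually_lt_const ((hE x hx').trans_lt hr)
  apply Eventually.frequently
  filter_upwards [hev, self_mem_nhdsWithin] with z hz hzx
  have hzx' : 0 < z - x := sub_pos.2 hzx
  refine lt_of_le_of_lt ?_ hz
  have hGx : G x = D x := by simp [G]
  rw [slope_def_field, slope_def_module, hGx, sub_self, sub_zero, norm_smul, norm_inv,
    Real.norm_of_nonneg hzx'.le, div_eq_inv_mul]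
  gcongr
  have := norm_sub_norm_le (D z) (G z)
  rw [hG] at this
  exact this

lemma aux_abstract {A : Type*} [CStarAlgebra A] {K : Type*} [TopologicalSpace K] [CompactSpace K]
    (L : C(K, A) →L[ℝ] A) (Z : C(K, A)) (hZ : ∀ f, Z * f = f * Z)
    (hL1 : ∀ X f, L (ContinuousMap.const K X * f) = X * L f)
    (hL2 : ∀ X f, L (f * ContinuousMap.const K X) = L f * X)
    (H H' H'' P : ℝ → A)
    (hsa : ∀ s ∈ Set.Icc (0:ℝ) 1, IsSelfAdjoint (H s))
    (hHderiv : ∀ s ∈ Set.Icc (0:ℝ) 1, HasDerivWithinAt H (H' s) (Set.Icc 0 1) s)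
    (hH'deriv : ∀ s ∈ Set.Icc (0:ℝ) 1, HasDerivWithinAt H' (H'' s) (Set.Icc 0 1) s)
    (hH''cont : ContinuousOn H'' (Set.Icc 0 1))
    (hunit : ∀ s ∈ Set.Icc (0:ℝ) 1, IsUnit (Z - ContinuousMap.const K (H s)))
    (hLP : ∀ s ∈ Set.Icc (0:ℝ) 1, L (Ring.inverse (Z - ContinuousMap.const K (H s))) = P s)
    (hPP : ∀ s ∈ Set.Icc (0:ℝ) 1, P s * P s = P s) :
    ∃ C : ℝ, ∀ ε ∈ Set.Ioc (0:ℝ) 1, ∀ ρ ρ' : ℝ → A,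
      (∀ s ∈ Set.Icc (0:ℝ) 1, HasDerivWithinAt ρ (ρ' s) (Set.Icc 0 1) s) →
      (∀ s ∈ Set.Icc (0:ℝ) 1, ε • ρ' s = -Complex.I • (H s * ρ s - ρ s * H s)) →
      ρ 0 = P 0 →
      ‖ρ 1 - P 1‖ ≤ C * ε := by
  let ι : A →L[ℝ] C(K, A) := ContinuousLinearMap.const ℝ K
  have hι : ∀ X, ContinuousMap.const K X = ι X := fun _ => rfl
  simp only [hι] at hL1 hL2 hunit hLP
  have hιd : ∀ (f : ℝ → A) f' s, HasDerivWithinAt f f' (Icc 0 1) s →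
      HasDerivWithinAt (fun s => ι (f s)) (ι f') (Icc 0 1) s := fun f f' s h =>
    ι.hasFDerivAt.comp_hasDerivWithinAt s h
  have hLd : ∀ (f : ℝ → C(K, A)) f' s, HasDerivWithinAt f f' (Icc 0 1) s →
      HasDerivWithinAt (fun s => L (f s)) (L f') (Icc 0 1) s := fun f f' s h =>
    L.hasFDerivAt.comp_hasDerivWithinAt s h
  set R : ℝ → C(K, A) := fun s => Ring.inverse (Z - ι (H s)) with hR
  set R1 : ℝ → C(K, A) := fun s => R s * ι (H' s) * R s with hR1
  have hRd : ∀ s ∈ Icc (0:ℝ) 1, HasDerivWithinAt R (R1 s) (Icc 0 1) s := by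
    intro s hs
    obtain ⟨u, hu⟩ := hunit s hs
    have h1 := hasFDerivAt_ringInverse (𝕜 := ℝ) u
    have h2 := (hιd _ _ s (hHderiv s hs)).const_sub Z
    rw [hu] at h1
    have h3 := h1.comp_hasDerivWithinAt s h2
    have e : (-ContinuousLinearMap.mulLeftRight ℝ (C(K, A)) ↑u⁻¹ ↑u⁻¹) (-ι (H' s)) = R1 s := by
      simp [hR1, hR, ← hu]
    rw [e] at h3
    exact h3
  set R2 : ℝ → C(K, A) := fun s =>
    (R1 s * ι (H' s) + R s * ι (H'' s)) * R s + R s * ι (H' s) * R1 s with hR2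
  have hR1d : ∀ s ∈ Icc (0:ℝ) 1, HasDerivWithinAt R1 (R2 s) (Icc 0 1) s := fun s hs =>
    ((hRd s hs).mul (hιd _ _ s (hH'deriv s hs))).mul (hRd s hs)
  have hRc : ContinuousOn R (Icc 0 1) := fun s hs => (hRd s hs).continuousWithinAt
  have hR1c : ContinuousOn R1 (Icc 0 1) := fun s hs => (hR1d s hs).continuousWithinAt
  have hH'c : ContinuousOn H' (Icc 0 1) := fun s hs => (hH'deriv s hs).continuousWithinAt
  have hR2c : ContinuousOn R2 (Icc 0 1) := by
    have h1 : ContinuousOn (fun s => ι (H' s)) (Icc 0 1) := ι.continuous.comp_continuousOn hH'c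
    have h2 : ContinuousOn (fun s => ι (H'' s)) (Icc 0 1) := ι.continuous.comp_continuousOn hH''cont
    exact (((hR1c.mul h1).add (hRc.mul h2)).mul hRc).add ((hRc.mul h1).mul hR1c)
  set p : ℝ → A := fun s => L (R s) with hp
  set p1 : ℝ → A := fun s => L (R1 s) with hp1
  set p2 : ℝ → A := fun s => L (R2 s) with hp2
  have hpd : ∀ s ∈ Icc (0:ℝ) 1, HasDerivWithinAt p (p1 s) (Icc 0 1) s := fun s hs =>
    hLd _ _ s (hRd s hs)
  have hp1d : ∀ s ∈ Icc (0:ℝ) 1, HasDerivWithinAt p1 (p2 s) (Icc 0 1) s := fun s hs =>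
    hLd _ _ s (hR1d s hs)
  have hpc : ContinuousOn p (Icc 0 1) := fun s hs => (hpd s hs).continuousWithinAt
  have hp1c : ContinuousOn p1 (Icc 0 1) := fun s hs => (hp1d s hs).continuousWithinAt
  have hp2c : ContinuousOn p2 (Icc 0 1) := L.continuous.comp_continuousOn hR2c
  have hpP : ∀ s ∈ Icc (0:ℝ) 1, p s = P s := hLP
  have hpp : ∀ s ∈ Icc (0:ℝ) 1, p s * p s = p s := fun s hs => by rw [hpP s hs, hPP s hs]
  have hpp1 : ∀ s ∈ Icc (0:ℝ) 1, p1 s * p s + p s * p1 s = p1 s := by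
    intro s hs
    have h1 := (hpd s hs).mul (hpd s hs)
    have h2 := (hpd s hs).congr (f₁ := p * p) (fun t ht => hpp t ht) (hpp s hs)
    exact (uniqueDiffOn_Icc zero_lt_one s hs).eq_deriv _ h1 h2
  set X : ℝ → A := fun s => p s * p1 s - p1 s * p s with hX
  set X1 : ℝ → A := fun s => (p1 s * p1 s + p s * p2 s) - (p2 s * p s + p1 s * p1 s) with hX1
  have hXd : ∀ s ∈ Icc (0:ℝ) 1, HasDerivWithinAt X (X1 s) (Icc 0 1) s := fun s hs =>
    ((hpd s hs).mul (hp1d s hs)).sub ((hp1d s hs).mul (hpd s hs))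
  have hXc : ContinuousOn X (Icc 0 1) := fun s hs => (hXd s hs).continuousWithinAt
  have hX1c : ContinuousOn X1 (Icc 0 1) :=
    ((hp1c.mul hp1c).add (hpc.mul hp2c)).sub ((hp2c.mul hpc).add (hp1c.mul hp1c))
  set B : ℝ → A := fun s => L (R s * ι (X s) * R s) with hB
  set B1 : ℝ → A := fun s =>
    L ((R1 s * ι (X s) + R s * ι (X1 s)) * R s + R s * ι (X s) * R1 s) with hB1
  have hBd : ∀ s ∈ Icc (0:ℝ) 1, HasDerivWithinAt B (B1 s) (Icc 0 1) s := fun s hs =>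
    hLd _ _ s (((hRd s hs).mul (hιd _ _ s (hXd s hs))).mul (hRd s hs))
  have hB1c : ContinuousOn B1 (Icc 0 1) := by
    have h1 : ContinuousOn (fun s => ι (X s)) (Icc 0 1) := ι.continuous.comp_continuousOn hXc
    have h2 : ContinuousOn (fun s => ι (X1 s)) (Icc 0 1) := ι.continuous.comp_continuousOn hX1c
    exact L.continuous.comp_continuousOn
      ((((hR1c.mul h1).add (hRc.mul h2)).mul hRc).add ((hRc.mul h1).mul hR1c))
  have hl : ∀ s ∈ Icc (0:ℝ) 1, ι (H s) * R s = Z * R s - 1 := by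
      intro s hs
      have := Ring.mul_inverse_cancel _ (hunit s hs)
      rw [sub_mul] at this
      rw [← this]; simp [hR]
  have hr : ∀ s ∈ Icc (0:ℝ) 1, R s * ι (H s) = R s * Z - 1 := by
      intro s hs
      have := Ring.inverse_mul_cancel _ (hunit s hs)
      rw [mul_sub] at this
      rw [← this]; simp [hR]
  have hcomm : ∀ s ∈ Icc (0:ℝ) 1, H s * B s - B s * H s = p1 s := by
    intro s hs
    have hl := hl s hs
    have hr := hr s hs
    have h1 : H s * B s - B s * H s = p s * X s - X s * p s := by
      simp only [hB, hp]
      rw [← hL1, ← hL2, ← hL1, ← hL2, ← map_sub, ← map_sub]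
      congr 1
      calc ι (H s) * (R s * ι (X s) * R s) - R s * ι (X s) * R s * ι (H s)
          = (ι (H s) * R s) * (ι (X s) * R s) - R s * ι (X s) * (R s * ι (H s)) := by noncomm_ring
        _ = R s * ι (X s) - ι (X s) * R s + (Z * (R s * ι (X s) * R s) - (R s * ι (X s) * R s) * Z) := by
            rw [hl, hr]; noncomm_ring
        _ = _ := by rw [hZ]; simp
    have e1 := hpp1 s hs
    have e2 := hpp s hs
    have e3 : p s * p1 s * p s = 0 := by
      have : p s * (p1 s * p s + p s * p1 s) * p s = p s * p1 s * p s := by rw [e1]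
      have h : p s * (p1 s * p s + p s * p1 s) * p s
        = p s * p1 s * (p s * p s) + (p s * p s) * p1 s * p s := by noncomm_ring
      rw [h, e2] at this
      simpa using this
    rw [h1, hX]
    calc p s * (p s * p1 s - p1 s * p s) - (p s * p1 s - p1 s * p s) * p s
        = (p s * p s) * p1 s + p1 s * (p s * p s) - 2 • (p s * p1 s * p s) := by noncomm_ring
      _ = p1 s := by rw [e2, e3]; simpa [add_comm] using e1
  obtain ⟨M, hM⟩ := isCompact_Icc.exists_bound_of_continuousOn hB1c
  refine ⟨‖B 0‖ + M + ‖B 1‖, fun ε hε ρ ρ' hρ hρ' h0 => ?_⟩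
  have hε0 : 0 < ε := hε.1
  have m0 : (0:ℝ) ∈ Icc (0:ℝ) 1 := by simp
  have m1 : (1:ℝ) ∈ Icc (0:ℝ) 1 := by simp
  have key := aux_norm_bound (fun s => ρ s - p s - ε • (Complex.I • B s))
    (fun s => ρ' s - p1 s - ε • (Complex.I • B1 s)) (fun s => -(ε⁻¹ • H s))
    (fun s => - (ε • (Complex.I • B1 s))) (ε * M) ?_ ?_ ?_ ?_
  · have e0 : ρ 0 - p 0 = 0 := by rw [h0, hpP 0 m0, sub_self]
    simp only [e0, zero_sub, norm_neg, norm_smul, Complex.norm_I, one_mul,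
      Real.norm_of_nonneg hε0.le] at key
    rw [hpP 1 m1] at key
    have := norm_sub_norm_le (ρ 1 - P 1) (ε • (Complex.I • B 1))
    simp only [norm_smul, Complex.norm_I, one_mul, Real.norm_of_nonneg hε0.le] at this
    linarith
  · intro s hs
    exact ((IsSelfAdjoint.all (ε⁻¹)).smul (hsa s hs)).neg
  · intro s hs
    exact ((hρ s hs).sub (hpd s hs)).sub (((hBd s hs).const_smul Complex.I).const_smul ε)
  · intro s hs
    have h1 : ρ' s = ε⁻¹ • (-Complex.I • (H s * ρ s - ρ s * H s)) := by
      rw [← hρ' s hs, smul_smul, inv_mul_cancel₀ hε0.ne', one_smul]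
    have h2 : H s * p s = p s * H s := by
      simp only [hp]
      rw [← hL1, ← hL2, hl s hs, hr s hs, hZ]
    have h3 : ∀ x : A, ε⁻¹ • ε • x = x := fun x => by
      rw [smul_smul, inv_mul_cancel₀ hε0.ne', one_smul]
    have h4 : -(ε⁻¹ • H s) * (ρ s - p s - ε • (Complex.I • B s))
        - (ρ s - p s - ε • (Complex.I • B s)) * -(ε⁻¹ • H s)
        = -(ε⁻¹ • (H s * ρ s - ρ s * H s)) + ε⁻¹ • ε • Complex.I • (H s * B s - B s * H s)
          + ε⁻¹ • (H s * p s - p s * H s) := by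
      simp only [mul_sub, sub_mul, smul_sub, neg_mul, mul_neg, smul_mul_assoc, mul_smul_comm]
      simp only [smul_neg]
      rw [smul_comm Complex.I ε⁻¹, smul_comm ε ε⁻¹]
      abel
    simp only [h4, h3, h2, sub_self, smul_zero, add_zero, hcomm s hs, h1, smul_add, smul_neg,
      neg_smul]
    rw [smul_smul Complex.I, Complex.I_mul_I, smul_comm Complex.I ε⁻¹, neg_one_smul]
    abel
  · intro s hs
    simp only [norm_neg, norm_smul, Complex.norm_I, one_mul, Real.norm_of_nonneg hε0.le]
    exact mul_le_mul_of_nonneg_left (hM s hs) hε0.le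

lemma aux_exists_L {A : Type*} [CStarAlgebra A] (c : ℂ) (r : ℝ) (hr : 0 ≤ r) :
    ∃ L : C(Metric.sphere c r, A) →L[ℝ] A, ∀ f, L f = ∫ θ in (0:ℝ)..(2 * Real.pi),
      ((2 * Real.pi * Complex.I)⁻¹ * deriv (circleMap c r) θ) •
        f ⟨circleMap c r θ, circleMap_mem_sphere c hr θ⟩ := by
  have hw : Continuous fun θ : ℝ => (2 * Real.pi * Complex.I)⁻¹ * deriv (circleMap c r) θ := by
    simp only [deriv_circleMap]
    fun_prop
  have hc : ∀ f : C(Metric.sphere c r, A), Continuous fun θ : ℝ =>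
      ((2 * Real.pi * Complex.I)⁻¹ * deriv (circleMap c r) θ) •
        f ⟨circleMap c r θ, circleMap_mem_sphere c hr θ⟩ := by
    intro f
    refine hw.smul (f.continuous.comp ?_)
    exact (continuous_circleMap c r).subtype_mk _
  obtain ⟨M, hM⟩ := (isCompact_uIcc (a := (0:ℝ)) (b := 2 * Real.pi)).exists_bound_of_continuousOn
    hw.continuousOn
  refine ⟨LinearMap.mkContinuous
    { toFun := fun f => ∫ θ in (0:ℝ)..(2 * Real.pi),
        ((2 * Real.pi * Complex.I)⁻¹ * deriv (circleMap c r) θ) •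
          f ⟨circleMap c r θ, circleMap_mem_sphere c hr θ⟩
      map_add' := ?_
      map_smul' := ?_ } (M * |2 * Real.pi - 0|) ?_, fun f => rfl⟩
  · intro f g
    rw [← intervalIntegral.integral_add ((hc f).intervalIntegrable _ _)
      ((hc g).intervalIntegrable _ _)]
    simp
  · intro m f
    rw [RingHom.id_apply, ← intervalIntegral.integral_smul]
    congr 1
    ext θ
    rw [ContinuousMap.smul_apply, smul_comm]
  · intro f
    have := intervalIntegral.norm_integral_le_of_norm_le_const (a := (0:ℝ)) (b := 2 * Real.pi)
      (C := M * ‖f‖) (f := fun θ => ((2 * Real.pi * Complex.I)⁻¹ * deriv (circleMap c r) θ) •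
          f ⟨circleMap c r θ, circleMap_mem_sphere c hr θ⟩) (fun θ hθ => by
        rw [norm_smul]
        have h1 := hM θ (uIoc_subset_uIcc hθ)
        have h2 := f.norm_coe_le_norm ⟨circleMap c r θ, circleMap_mem_sphere c hr θ⟩
        exact mul_le_mul h1 h2 (norm_nonneg _) ((norm_nonneg _).trans h1))
    calc _ ≤ M * ‖f‖ * |2 * Real.pi - 0| := this
      _ = _ := by ring

lemma aux_L_mul {A : Type*} [CStarAlgebra A] (c : ℂ) (r : ℝ) (hr : 0 ≤ r)
    (f : C(Metric.sphere c r, A)) {E : Type*} [NormedAddCommGroup E] [NormedSpace ℂ E]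
    [CompleteSpace E] (m : A →L[ℂ] E) :
    m (∫ θ in (0:ℝ)..(2 * Real.pi),
      ((2 * Real.pi * Complex.I)⁻¹ * deriv (circleMap c r) θ) •
        f ⟨circleMap c r θ, circleMap_mem_sphere c hr θ⟩) = 
      ∫ θ in (0:ℝ)..(2 * Real.pi),
      ((2 * Real.pi * Complex.I)⁻¹ * deriv (circleMap c r) θ) •
        m (f ⟨circleMap c r θ, circleMap_mem_sphere c hr θ⟩) := by
  rw [← ContinuousLinearMap.intervalIntegral_comp_comm]
  · simp
  · apply Continuous.intervalIntegrable
    simp only [deriv_circleMap]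
    refine Continuous.smul (by fun_prop) (f.continuous.comp ?_)
    exact (continuous_circleMap c r).subtype_mk _

lemma aux_L1 {A : Type*} [CStarAlgebra A] (c : ℂ) (r : ℝ) (hr : 0 ≤ r)
    (L : C(Metric.sphere c r, A) →L[ℝ] A) (hL : ∀ f, L f = ∫ θ in (0:ℝ)..(2 * Real.pi),
      ((2 * Real.pi * Complex.I)⁻¹ * deriv (circleMap c r) θ) •
        f ⟨circleMap c r θ, circleMap_mem_sphere c hr θ⟩) (X : A) (f : C(Metric.sphere c r, A)) :
    L (ContinuousMap.const _ X * f) = X * L f := by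
  rw [hL, hL]
  exact (aux_L_mul c r hr f (ContinuousLinearMap.mul ℂ A X)).symm

lemma aux_L2 {A : Type*} [CStarAlgebra A] (c : ℂ) (r : ℝ) (hr : 0 ≤ r)
    (L : C(Metric.sphere c r, A) →L[ℝ] A) (hL : ∀ f, L f = ∫ θ in (0:ℝ)..(2 * Real.pi),
      ((2 * Real.pi * Complex.I)⁻¹ * deriv (circleMap c r) θ) •
        f ⟨circleMap c r θ, circleMap_mem_sphere c hr θ⟩) (X : A) (f : C(Metric.sphere c r, A)) :
    L (f * ContinuousMap.const _ X) = L f * X := by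
  rw [hL, hL]
  exact (aux_L_mul c r hr f ((ContinuousLinearMap.mul ℂ A).flip X)).symm

lemma aux_inv {A : Type*} [CStarAlgebra A] {K : Type*} [TopologicalSpace K] [CompactSpace K]
    (W : C(K, A)) (hW : IsUnit W) (z : K) : Ring.inverse W z * W z = 1 := by
  have h1 := Ring.inverse_mul_cancel _ hW
  exact congrArg (fun f : C(K, A) => f z) h1

lemma aux_cauchy (a b γ : ℝ) (hab : a ≤ b) (hγ : 0 < γ) (x : ℝ) :
    (x ∈ Icc a b → ∫ θ in (0:ℝ)..(2 * Real.pi), (2 * Real.pi * Complex.I)⁻¹ *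
      deriv (circleMap (((a + b) / 2 : ℝ) : ℂ) ((b - a) / 2 + γ / 2)) θ *
        (circleMap (((a + b) / 2 : ℝ) : ℂ) ((b - a) / 2 + γ / 2) θ - x)⁻¹ = 1) ∧
    ((x ≤ a - γ ∨ b + γ ≤ x) → ∫ θ in (0:ℝ)..(2 * Real.pi), (2 * Real.pi * Complex.I)⁻¹ *
      deriv (circleMap (((a + b) / 2 : ℝ) : ℂ) ((b - a) / 2 + γ / 2)) θ *
        (circleMap (((a + b) / 2 : ℝ) : ℂ) ((b - a) / 2 + γ / 2) θ - x)⁻¹ = 0) := by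
  set c : ℂ := (((a + b) / 2 : ℝ) : ℂ)
  set r : ℝ := (b - a) / 2 + γ / 2
  have hr : 0 < r := by simp only [r]; linarith
  have e : ∫ θ in (0:ℝ)..(2 * Real.pi), (2 * Real.pi * Complex.I)⁻¹ *
      deriv (circleMap c r) θ * (circleMap c r θ - x)⁻¹
      = (2 * Real.pi * Complex.I)⁻¹ * ∮ z in C(c, r), (z - x)⁻¹ := by
    rw [circleIntegral, ← intervalIntegral.integral_const_mul]
    simp [mul_assoc]
  rw [e]
  have hd : dist (x : ℂ) c = |x - (a + b) / 2| := by
    rw [Complex.dist_eq]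
    simp only [c]
    rw [← Complex.ofReal_sub, Complex.norm_real, Real.norm_eq_abs]
  constructor
  · intro hx
    rw [circleIntegral.integral_sub_inv_of_mem_ball]
    · exact inv_mul_cancel₀ Complex.two_pi_I_ne_zero
    · rw [Metric.mem_ball, hd, abs_lt]
      simp only [r]
      constructor <;> linarith [hx.1, hx.2]
  · intro hx
    have hout : ∀ z ∈ Metric.closedBall c r, z - (x : ℂ) ≠ 0 := by
      intro z hz h0
      rw [sub_eq_zero.1 h0, Metric.mem_closedBall, hd, abs_le] at hz
      simp only [r] at hz
      rcases hx with hx | hx <;> linarith [hz.1, hz.2]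
    rw [Complex.circleIntegral_eq_zero_of_differentiable_on_off_countable hr.le
      (s := ∅) (by simp), mul_zero]
    · exact (continuousOn_id.sub continuousOn_const).inv₀ hout
    · intro z hz
      exact (differentiableAt_id.sub_const _).inv (hout z (Metric.ball_subset_closedBall hz.1))

lemma aux_poly {V : Type*} [NormedAddCommGroup V] [InnerProductSpace ℂ V]
    [FiniteDimensional ℂ V] (T : V →L[ℂ] V) (p : Polynomial ℝ) (v : V) (x : ℝ)
    (hv : T v = (x : ℂ) • v) : (Polynomial.aeval T p) v = ((p.eval x : ℝ) : ℂ) • v := by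
  induction p using Polynomial.induction_on' with
  | add p q hp hq => simp [hp, hq, add_smul]
  | monomial n a =>
    have : ∀ n : ℕ, (T ^ n) v = ((x : ℂ) ^ n) • v := by
      intro n
      induction n with
      | zero => simp
      | succ n ih => rw [pow_succ, mul_apply_eq_comp, hv, map_smul, ih, smul_smul, pow_succ']
    rw [Polynomial.aeval_monomial, mul_apply_eq_comp, this, Algebra.algebraMap_eq_smul_one]
    simp only [Polynomial.eval_monomial, map_smul]
    push_cast
    simp only [mul_smul]
    simp
    rw [smul_comm]

lemma aux_cfc {V : Type*} [NormedAddCommGroup V] [InnerProductSpace ℂ V]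
    [FiniteDimensional ℂ V] (T : V →L[ℂ] V) (hT : IsSelfAdjoint T) (f : ℝ → ℝ) (v : V) (x : ℝ)
    (hv : T v = (x : ℂ) • v) (hx : x ∈ spectrum ℝ T) (hfin : (spectrum ℝ T).Finite) :
    cfc f T v = ((f x : ℝ) : ℂ) • v := by
  classical
  set p : Polynomial ℝ := Lagrange.interpolate hfin.toFinset id f
  have hp : ∀ y ∈ spectrum ℝ T, p.eval y = f y := fun y hy =>
    Lagrange.eval_interpolate_at_node (v := id) f (by simp [Set.injOn_id]) (hfin.mem_toFinset.2 hy)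
  have h1 : cfc f T = cfc p.eval T := cfc_congr fun y hy => (hp y hy).symm
  rw [h1, cfc_polynomial p T, aux_poly T p v x hv, hp x hx]

lemma aux_spec {V : Type*} [NormedAddCommGroup V] [InnerProductSpace ℂ V]
    [FiniteDimensional ℂ V] (T : V →L[ℂ] V) (v : V) (x : ℝ) (h0 : v ≠ 0)
    (hv : T v = (x : ℂ) • v) : x ∈ spectrum ℝ T := by
  rw [spectrum.mem_iff]
  intro hu
  obtain ⟨u, hu⟩ := hu
  apply h0
  have h1 : (u : V →L[ℂ] V) v = 0 := by
    rw [hu, Algebra.algebraMap_eq_smul_one]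
    simp [hv]
  have h2 : ((↑u⁻¹ : V →L[ℂ] V) * u) v = v := by simp
  rw [mul_apply_eq_comp, h1, map_zero] at h2
  exact h2.symm

lemma aux_spec_fin {V : Type*} [NormedAddCommGroup V] [InnerProductSpace ℂ V]
    [FiniteDimensional ℂ V] (T : V →L[ℂ] V) : (spectrum ℝ T).Finite := by
  have h : (spectrum ℂ ((Module.End.toContinuousLinearMap V).symm T)).Finite :=
    Module.End.finite_spectrum _
  rw [AlgEquiv.spectrum_eq] at h
  rw [← spectrum.preimage_algebraMap (R := ℝ) ℂ]
  exact h.preimage (FaithfulSMul.algebraMap_injective ℝ ℂ).injOn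

lemma aux_ext {V : Type*} [NormedAddCommGroup V] [InnerProductSpace ℂ V]
    [FiniteDimensional ℂ V] (T : V →L[ℂ] V) (hT : IsSelfAdjoint T) (F G : V →L[ℂ] V)
    (h : ∀ (v : V) (x : ℝ), v ≠ 0 → T v = (x : ℂ) • v → F v = G v) : F = G := by
  have hs : (T : V →ₗ[ℂ] V).IsSymmetric := ContinuousLinearMap.isSelfAdjoint_iff_isSymmetric.1 hT
  apply ContinuousLinearMap.coe_injective
  refine (hs.eigenvectorBasis rfl).toBasis.ext fun i => ?_
  have := hs.hasEigenvector_eigenvectorBasis rfl i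
  simp only [OrthonormalBasis.coe_toBasis]
  exact h _ (hs.eigenvalues rfl i) this.2 this.apply_eq_smul


/-- Adiabatic theorem with a gap: for a `C²` family of gapped Hermitian operators on
`[0,1]` with `Ḣ(0) = Ḣ(1) = 0`, any solution of `ε ρ̇ = -i[H(s), ρ]`, `ρ(0) = P(0)`,
satisfies `‖ρ(1) - P(1)‖ ≤ C ε` with `C` independent of `ε`. -/
theorem stmt_16 {𝓗 : Type*} [NormedAddCommGroup 𝓗] [InnerProductSpace ℂ 𝓗]
    [FiniteDimensional ℂ 𝓗]
    (a b γ : ℝ) (hab : a ≤ b) (hγ : 0 < γ)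
    (H H' H'' P : ℝ → 𝓗 →L[ℂ] 𝓗) (S S' : ℝ → Set ℝ)
    (hsa : ∀ s ∈ Set.Icc (0:ℝ) 1, IsSelfAdjoint (H s))
    (hHderiv : ∀ s ∈ Set.Icc (0:ℝ) 1, HasDerivWithinAt H (H' s) (Set.Icc 0 1) s)
    (hH'deriv : ∀ s ∈ Set.Icc (0:ℝ) 1, HasDerivWithinAt H' (H'' s) (Set.Icc 0 1) s)
    (hH''cont : ContinuousOn H'' (Set.Icc 0 1))
    (hspec : ∀ s ∈ Set.Icc (0:ℝ) 1, spectrum ℝ (H s) = S s ∪ S' s)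
    (hS : ∀ s ∈ Set.Icc (0:ℝ) 1, S s ⊆ Set.Icc a b)
    (hgap : ∀ s ∈ Set.Icc (0:ℝ) 1, ∀ x ∈ S' s, ∀ y ∈ Set.Icc a b, γ ≤ |x - y|)
    (hP : ∀ s ∈ Set.Icc (0:ℝ) 1, P s = cfc (Set.indicator (S s) fun _ => (1:ℝ)) (H s))
    (hH'0 : H' 0 = 0) (hH'1 : H' 1 = 0) :
    ∃ C : ℝ, ∀ ε ∈ Set.Ioc (0:ℝ) 1, ∀ ρ ρ' : ℝ → 𝓗 →L[ℂ] 𝓗,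
      (∀ s ∈ Set.Icc (0:ℝ) 1, HasDerivWithinAt ρ (ρ' s) (Set.Icc 0 1) s) →
      (∀ s ∈ Set.Icc (0:ℝ) 1, ε • ρ' s = -Complex.I • (H s * ρ s - ρ s * H s)) →
      ρ 0 = P 0 →
      ‖ρ 1 - P 1‖ ≤ C * ε := by
  set c : ℂ := (((a + b) / 2 : ℝ) : ℂ) with hc
  set r : ℝ := (b - a) / 2 + γ / 2 with hr
  have hr0 : 0 ≤ r := by rw [hr]; linarith
  obtain ⟨L, hL⟩ := aux_exists_L (A := 𝓗 →L[ℂ] 𝓗) c r hr0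
  let Z : C(Metric.sphere c r, 𝓗 →L[ℂ] 𝓗) :=
    ⟨fun z => algebraMap ℂ (𝓗 →L[ℂ] 𝓗) z, by fun_prop⟩
  have hsplit : ∀ s ∈ Icc (0:ℝ) 1, ∀ x ∈ S' s, x ≤ a - γ ∨ b + γ ≤ x := by
    intro s hs x hx
    have hg := hgap s hs x hx
    by_cases h1 : x ∈ Icc a b
    · have := hg x h1
      simp at this
      linarith
    · rw [mem_Icc, not_and_or, not_le, not_le] at h1
      rcases h1 with h1 | h1
      · left
        have := hg a ⟨le_rfl, hab⟩
        rw [abs_of_neg (by linarith)] at this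
        linarith
      · right
        have := hg b ⟨hab, le_rfl⟩
        rw [abs_of_pos (by linarith)] at this
        linarith
  have hunit : ∀ s ∈ Icc (0:ℝ) 1, IsUnit (Z - ContinuousMap.const _ (H s)) := by
    intro s hs
    rw [ContinuousMap.isUnit_iff_forall_isUnit]
    rintro ⟨z, hz⟩
    change IsUnit (algebraMap ℂ (𝓗 →L[ℂ] 𝓗) z - H s)
    by_contra hnu
    have hzs : z ∈ spectrum ℂ (H s) := spectrum.mem_iff.2 hnu
    have hre := (hsa s hs).mem_spectrum_eq_re hzs
    have hxs : z.re ∈ spectrum ℝ (H s) := by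
      rw [← spectrum.preimage_algebraMap (R := ℝ) ℂ]
      change ((z.re : ℝ) : ℂ) ∈ spectrum ℂ (H s)
      rwa [← hre]
    rw [mem_sphere_iff_norm, hre, hc, ← Complex.ofReal_sub, Complex.norm_real,
      Real.norm_eq_abs] at hz
    rw [hspec s hs] at hxs
    rcases hxs with hx | hx
    · have := hS s hs hx
      have h2 : |z.re - (a + b) / 2| < r := by
        rw [abs_lt, hr]
        constructor <;> linarith [this.1, this.2]
      linarith
    · have h2 : |z.re - (a + b) / 2| ≤ r := hz.le
      rw [abs_le, hr] at h2
      rcases hsplit s hs _ hx with h | h <;> linarith [h2.1, h2.2]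
  have hPv : ∀ s ∈ Icc (0:ℝ) 1, ∀ (v : 𝓗) (x : ℝ), v ≠ 0 → H s v = (x : ℂ) • v →
      P s v = (((S s).indicator (fun _ => (1:ℝ)) x : ℝ) : ℂ) • v := by
    intro s hs v x h0 hv
    rw [hP s hs]
    exact aux_cfc (H s) (hsa s hs) _ v x hv (aux_spec _ v x h0 hv) (aux_spec_fin _)
  refine aux_abstract L Z ?_ ?_ ?_ H H' H'' P hsa hHderiv hH'deriv hH''cont hunit ?_ ?_
  · intro f
    ext1 z
    exact Algebra.commutes (z : ℂ) (f z)
  · intro X f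
    exact aux_L1 c r hr0 L hL X f
  · intro X f
    exact aux_L2 c r hr0 L hL X f
  · intro s hs
    refine aux_ext (H s) (hsa s hs) _ _ fun v x h0 hv => ?_
    rw [hPv s hs v x h0 hv, hL]
    set R := Ring.inverse (Z - ContinuousMap.const _ (H s)) with hR
    have hRv : ∀ z : Metric.sphere c r, R z v = ((z : ℂ) - x)⁻¹ • v := by
      intro z
      have h2 : R z * (algebraMap ℂ (𝓗 →L[ℂ] 𝓗) z - H s) = 1 :=
        aux_inv (Z - ContinuousMap.const _ (H s)) (hunit s hs) z
      have h3 : R z ((algebraMap ℂ (𝓗 →L[ℂ] 𝓗) z - H s) v) = v :=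
        congrArg (fun f : 𝓗 →L[ℂ] 𝓗 => f v) h2
      have h4 : (algebraMap ℂ (𝓗 →L[ℂ] 𝓗) z - H s) v = ((z : ℂ) - x) • v := by
        rw [Algebra.algebraMap_eq_smul_one, sub_smul, ← hv]
        simp
      rw [h4, map_smul] at h3
      have h5 : (z : ℂ) - x ≠ 0 := by
        intro h
        rw [h, zero_smul] at h3
        exact h0 h3.symm
      rw [eq_inv_smul_iff₀ h5, h3]
    have h6 := aux_L_mul c r hr0 R (ContinuousLinearMap.apply ℂ 𝓗 v)
    simp only [ContinuousLinearMap.apply_apply, hRv, smul_smul] at h6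
    rw [h6, intervalIntegral.integral_smul_const]
    congr 1
    have hx := aux_spec _ v x h0 hv
    have hca := aux_cauchy a b γ hab hγ x
    by_cases hxS : x ∈ S s
    · rw [indicator_of_mem hxS, Complex.ofReal_one]
      exact hca.1 (hS s hs hxS)
    · rw [indicator_of_notMem hxS, Complex.ofReal_zero]
      rw [hspec s hs] at hx
      exact hca.2 (hsplit s hs x (hx.resolve_left hxS))
  · intro s hs
    refine aux_ext (H s) (hsa s hs) _ _ fun v x h0 hv => ?_
    have h1 := hPv s hs v x h0 hv
    rw [mul_apply_eq_comp, h1, map_smul, h1, smul_smul]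
    congr 1
    by_cases hxS : x ∈ S s <;> simp [hxS]
end
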